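/- For every finite nonempty set Y ⊆ V, every finite set P ⊆ V, and every integer k ≥ 1, the approximate potential penalty is bounded below by g'(Y,P,k) ≥ g(Y,P,k) − (k − 1) · ( f({r},P) − g(Y,P,k) ); equivalently, g'(Y,P,k) ≥ k · g(Y,P,k) − (k − 1) · f({r},P). -/

import Mathlib

open scoped Classical

/-- Pair-wise penalty `f⟨v,t⟩`: `dist(v,t) = depth t - depth v` if `v → t`,
and `dist(r,t) = depth t` otherwise. -/
noncomputable def fpair {V : Type*} (R : V → V → Prop) (depth : V → ℕ) (v t : V) : ℕ :=
  if R v t then depth t - depth v else depth t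

/-- Set penalty `f(S,t) = min_{v ∈ S ∪ {r}} f⟨v,t⟩`. -/
noncomputable def fsel {V : Type*} (R : V → V → Prop) (depth : V → ℕ) (r : V)
    (S : Finset V) (t : V) : ℕ :=
  (insert r S).inf' (Finset.insert_nonempty r S) fun v => fpair R depth v t

/-- Set-wise penalty `f(S,P) = Σ_{t ∈ P} f(S,t)`. -/
noncomputable def fsum {V : Type*} (R : V → V → Prop) (depth : V → ℕ) (r : V)
    (S : Finset V) (P : Finset V) : ℕ :=
  ∑ t ∈ P, fsel R depth r S t

/-- Potential penalty `g(Y,P,k) = min { f(S,P) : S ⊆ Y, S nonempty, |S| ≤ k }`. -/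
noncomputable def gpen {V : Type*} (R : V → V → Prop) (depth : V → ℕ) (r : V)
    (Y P : Finset V) (k : ℕ) : ℕ :=
  sInf {n : ℕ | ∃ S : Finset V, S ⊆ Y ∧ S.Nonempty ∧ S.card ≤ k ∧ n = fsum R depth r S P}

/-- Selected gain `IG(x) = |P ∩ des(x)| · dist(r,x)` (with `dist(r,x) = depth x`). -/
noncomputable def selGain {V : Type*} (R : V → V → Prop) (depth : V → ℕ)
    (P : Finset V) (x : V) : ℕ :=
  (P.filter fun t => R x t).card * depth x

/-- Approximate potential penalty
`g'(Y,P,k) = f({r},P) − max { Σ_{x ∈ S} IG(x) : S ⊆ Y, S nonempty, |S| ≤ k }`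
(as an integer, since the subtraction may be negative). -/
noncomputable def gapprox {V : Type*} (R : V → V → Prop) (depth : V → ℕ) (r : V)
    (Y P : Finset V) (k : ℕ) : ℤ :=
  (fsum R depth r {r} P : ℤ) -
    sSup {m : ℤ | ∃ S : Finset V, S ⊆ Y ∧ S.Nonempty ∧ S.card ≤ k ∧
      m = ∑ x ∈ S, (selGain R depth P x : ℤ)}

/-!
A vertex `x` above `t` lowers the penalty `f⟨r,t⟩ = depth t` of `t` by exactly `depth x`, so summing
over `P` any selection containing `x` saves at least `IG(x)` over `{r}`. For `x ∈ Y` the selection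
`{x}` competes in the minimum `g(Y,P,k)`, whence `IG(x) ≤ f({r},P) − g(Y,P,k)`. A selection of at
most `k` vertices adds up at most `k` such gains.
-/

section

variable {V : Type*} {R : V → V → Prop} {r : V} {depth : V → ℕ} {S Y P : Finset V} {k : ℕ}

theorem fsel_singleton_root (hdepth_root : depth r = 0) (t : V) :
    fsel R depth r {r} t = depth t := by
  simp [fsel, fpair, hdepth_root]

theorem fsel_le_fpair {v : V} (hv : v ∈ S) (t : V) : fsel R depth r S t ≤ fpair R depth v t :=
  Finset.inf'_le (fun v => fpair R depth v t) (Finset.mem_insert_of_mem hv)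

theorem ite_depth_add_fpair {v t : V} (hdepth_mono : R v t → depth v ≤ depth t) :
    (if R v t then depth v else 0) + fpair R depth v t = depth t := by
  by_cases h : R v t
  · simp only [fpair, if_pos h, Nat.add_sub_cancel' (hdepth_mono h)]
  · simp only [fpair, if_neg h, zero_add]

theorem selGain_eq_sum (x : V) :
    selGain R depth P x = ∑ t ∈ P, if R x t then depth x else 0 := by
  rw [selGain, ← Finset.sum_filter, Finset.sum_const, smul_eq_mul]

theorem selGain_add_fsum_le (hdepth_root : depth r = 0)
    (hdepth_mono : ∀ u v, R u v → depth u ≤ depth v) {x : V} (hx : x ∈ S) :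
    selGain R depth P x + fsum R depth r S P ≤ fsum R depth r {r} P := by
  rw [selGain_eq_sum, fsum, fsum, ← Finset.sum_add_distrib]
  refine Finset.sum_le_sum fun t _ => ?_
  calc (if R x t then depth x else 0) + fsel R depth r S t
      ≤ (if R x t then depth x else 0) + fpair R depth x t := by
        gcongr
        exact fsel_le_fpair hx t
    _ = depth t := ite_depth_add_fpair (hdepth_mono x t)
    _ = fsel R depth r {r} t := (fsel_singleton_root hdepth_root t).symm

theorem gpen_le_fsum (hSY : S ⊆ Y) (hS : S.Nonempty) (hSk : S.card ≤ k) :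
    gpen R depth r Y P k ≤ fsum R depth r S P :=
  Nat.sInf_le ⟨S, hSY, hS, hSk, rfl⟩

theorem selGain_add_gpen_le (hdepth_root : depth r = 0)
    (hdepth_mono : ∀ u v, R u v → depth u ≤ depth v) {x : V} (hx : x ∈ Y) (hk : 1 ≤ k) :
    selGain R depth P x + gpen R depth r Y P k ≤ fsum R depth r {r} P :=
  calc selGain R depth P x + gpen R depth r Y P k
      ≤ selGain R depth P x + fsum R depth r {x} P := by
        gcongr
        exact gpen_le_fsum (Finset.singleton_subset_iff.2 hx) (Finset.singleton_nonempty x) hk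
    _ ≤ fsum R depth r {r} P :=
        selGain_add_fsum_le hdepth_root hdepth_mono (Finset.mem_singleton_self x)

theorem gpen_le_fsum_singleton_root (hdepth_root : depth r = 0)
    (hdepth_mono : ∀ u v, R u v → depth u ≤ depth v) (hY : Y.Nonempty) (hk : 1 ≤ k) :
    gpen R depth r Y P k ≤ fsum R depth r {r} P :=
  let ⟨_, hy⟩ := hY
  le_of_add_le_right (selGain_add_gpen_le hdepth_root hdepth_mono hy hk)

theorem sum_selGain_le (hdepth_root : depth r = 0)
    (hdepth_mono : ∀ u v, R u v → depth u ≤ depth v) (hSY : S ⊆ Y) (hSk : S.card ≤ k) :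
    ∑ x ∈ S, selGain R depth P x ≤ k * (fsum R depth r {r} P - gpen R depth r Y P k) := by
  have hgain : ∀ x ∈ S, selGain R depth P x ≤ fsum R depth r {r} P - gpen R depth r Y P k := by
    intro x hx
    have hk : 1 ≤ k := (Finset.card_pos.2 ⟨x, hx⟩).trans_le hSk
    exact Nat.le_sub_of_add_le (selGain_add_gpen_le hdepth_root hdepth_mono (hSY hx) hk)
  exact (Finset.sum_le_card_nsmul S _ _ hgain).trans (Nat.mul_le_mul_right _ hSk)

theorem fsum_singleton_root_sub_gapprox_le (hdepth_root : depth r = 0)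
    (hdepth_mono : ∀ u v, R u v → depth u ≤ depth v) (hY : Y.Nonempty) (hk : 1 ≤ k) :
    (fsum R depth r {r} P : ℤ) - gapprox R depth r Y P k ≤
      k * ((fsum R depth r {r} P : ℤ) - gpen R depth r Y P k) := by
  have hgpen : gpen R depth r Y P k ≤ fsum R depth r {r} P :=
    gpen_le_fsum_singleton_root hdepth_root hdepth_mono hY hk
  obtain ⟨y, hy⟩ := hY
  rw [gapprox, sub_sub_cancel, ← Nat.cast_sub hgpen]
  refine csSup_le
    ⟨_, {y}, Finset.singleton_subset_iff.2 hy, Finset.singleton_nonempty y, hk, rfl⟩ ?_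
  rintro _ ⟨S, hSY, -, hSk, rfl⟩
  exact_mod_cast sum_selGain_le hdepth_root hdepth_mono hSY hSk

end

theorem stmt14_general {V : Type*} (R : V → V → Prop) (r : V) (depth : V → ℕ)
    (hdepth_root : depth r = 0)
    (hdepth_mono : ∀ u v, R u v → depth u ≤ depth v)
    (Y P : Finset V) (hY : Y.Nonempty) (k : ℕ) (hk : 1 ≤ k) :
    gapprox R depth r Y P k ≥
        (gpen R depth r Y P k : ℤ) -
          ((k : ℤ) - 1) * ((fsum R depth r {r} P : ℤ) - (gpen R depth r Y P k : ℤ)) ∧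
      gapprox R depth r Y P k ≥
        (k : ℤ) * (gpen R depth r Y P k : ℤ) -
          ((k : ℤ) - 1) * (fsum R depth r {r} P : ℤ) := by
  have hloss := fsum_singleton_root_sub_gapprox_le (P := P) hdepth_root hdepth_mono hY hk
  constructor <;> linarith

/-- for every finite nonempty `Y ⊆ V`, finite `P ⊆ V`, and `k ≥ 1`,
`g'(Y,P,k) ≥ g(Y,P,k) − (k−1)·(f({r},P) − g(Y,P,k))`, equivalently
`g'(Y,P,k) ≥ k·g(Y,P,k) − (k−1)·f({r},P)`. -/
theorem stmt14 {V : Type*} [Fintype V] (R : V → V → Prop) (r : V) (depth : V → ℕ)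
    (hrefl : ∀ v, R v v)
    (htrans : ∀ u v w, R u v → R v w → R u w)
    (hanti : ∀ u v, R u v → R v u → u = v)
    (hroot : ∀ v, R r v)
    (hchain : ∀ u v w, R u v → R w v → R u w ∨ R w u)
    (hdepth_root : depth r = 0)
    (hdepth_mono : ∀ u v, R u v → depth u ≤ depth v)
    (hdepth_eq : ∀ u v, R u v → (depth u = depth v ↔ u = v))
    (Y P : Finset V) (hY : Y.Nonempty) (k : ℕ) (hk : 1 ≤ k) :
    gapprox R depth r Y P k ≥
        (gpen R depth r Y P k : ℤ) -
          ((k : ℤ) - 1) * ((fsum R depth r {r} P : ℤ) - (gpen R depth r Y P k : ℤ)) ∧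
      gapprox R depth r Y P k ≥
        (k : ℤ) * (gpen R depth r Y P k : ℤ) -
          ((k : ℤ) - 1) * (fsum R depth r {r} P : ℤ) :=
  stmt14_general R r depth hdepth_root hdepth_mono Y P hY k hk
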